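/- For every Cayley tree T labelled with [n]_0, the preference sequence π_T, defined by π_T(i) = ω_T^{-1}(f_T(i)) + 1 for i ∈ {1,…,n}, is a parking function of length n. -/

import Mathlib

/-!
Car `c` parks exactly at the spot `ω_T⁻¹(c)`, the step at which the search visits the vertex `c`;
since `ω_T` is a permutation, every car parks. Indeed `c` is available to the search at precisely
the steps `s` with `ω_T⁻¹(f_T(c)) < s ≤ ω_T⁻¹(c)`, that is, `π_T(c) ≤ s ≤ ω_T⁻¹(c)`. At each such
step before the last one the search prefers a smaller vertex, and the car with that label has
already taken the spot `s`.
-/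

open scoped Classical

namespace WearyParking

/-- `f` is the parent function of a Cayley tree on `{0,…,n}` rooted at `0`:
`f 0 = 0`, `f` is pinned to `0` outside `{1,…,n}`, `f` maps `{1,…,n}` into `{0,…,n}`,
and every vertex reaches the root under iteration. -/
def IsCayleyTree (n : ℕ) (f : ℕ → ℕ) : Prop :=
  f 0 = 0 ∧ (∀ i, n < i → f i = 0) ∧
  (∀ i, 1 ≤ i → i ≤ n → f i ≤ n) ∧
  (∀ i, 1 ≤ i → i ≤ n → ∃ k, f^[k] i = 0)

/-- A non-root vertex `i` is a record of the tree if it is greater than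
all of its ancestors. -/
def IsRecord (n : ℕ) (f : ℕ → ℕ) (i : ℕ) : Prop :=
  1 ≤ i ∧ i ≤ n ∧ ∀ k, 1 ≤ k → f^[k] i < i

/-- The smallest record larger than `i`. -/
noncomputable def nextRecord (n : ℕ) (f : ℕ → ℕ) (i : ℕ) : ℕ :=
  sInf {j | IsRecord n f j ∧ i < j}

/-- The record (blob) code of the tree, a function on `{1,…,n-1}`:
at a non-record position it records the parent, and at a record position it
records the parent of the next record. -/
noncomputable def blob (n : ℕ) (f : ℕ → ℕ) (i : ℕ) : ℕ :=
  if IsRecord n f i then f (nextRecord n f i) else f i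

/-- Number of children of vertex `v` in the tree. -/
def numChildren (n : ℕ) (f : ℕ → ℕ) (v : ℕ) : ℕ :=
  ((Finset.Icc 1 n).filter fun i => f i = v).card

/-- The list of the first `i+1` vertices visited by the priority-first search:
start at the root `0`; at each step visit the smallest unvisited vertex whose
parent has been visited. -/
noncomputable def wearyList (n : ℕ) (f : ℕ → ℕ) : ℕ → List ℕ
  | 0 => [0]
  | (i + 1) =>
      wearyList n f i ++
        [sInf {v | 1 ≤ v ∧ v ≤ n ∧ v ∉ wearyList n f i ∧ f v ∈ wearyList n f i}]

/-- The weary permutation of the tree: `weary n f i` is the `i`-th vertex visited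
by the priority-first search (with `weary n f 0 = 0`). -/
noncomputable def weary (n : ℕ) (f : ℕ → ℕ) (i : ℕ) : ℕ :=
  (wearyList n f n).getD i 0

/-- The inverse of the weary permutation. -/
noncomputable def wearyInv (n : ℕ) (f : ℕ → ℕ) (v : ℕ) : ℕ :=
  sInf {i | weary n f i = v}

/-- The preference sequence `π_T` of the tree: `π_T i = ω_T⁻¹ (f_T i) + 1`. -/
noncomputable def pref (n : ℕ) (f : ℕ → ℕ) (i : ℕ) : ℕ :=
  wearyInv n f (f i) + 1

/-- Parent function of the priority tree `pt(T)`: `ω_T⁻¹ ∘ f_T ∘ ω_T`. -/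
noncomputable def prioParent (n : ℕ) (f : ℕ → ℕ) (i : ℕ) : ℕ :=
  wearyInv n f (f (weary n f i))

/-- The list of spots occupied by cars `1,…,c` in the classical parking process:
car `c` parks at the first spot `≥ π c` not occupied by an earlier car. -/
noncomputable def spotList (π : ℕ → ℕ) : ℕ → List ℕ
  | 0 => []
  | (c + 1) => spotList π c ++ [sInf {s | π (c + 1) ≤ s ∧ s ∉ spotList π c}]

/-- The spot where car `c` ends up in the classical parking process. -/
noncomputable def spot (π : ℕ → ℕ) (c : ℕ) : ℕ :=
  (spotList π c).getD (c - 1) 0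

/-- `π` is a parking function of length `n`: preferences lie in `{1,…,n}`
(pinned to `1` outside `{1,…,n}`) and every car parks within the `n` spots. -/
def IsParkingFun (n : ℕ) (π : ℕ → ℕ) : Prop :=
  (∀ c, 1 ≤ c → c ≤ n → 1 ≤ π c ∧ π c ≤ n) ∧
  (∀ c, c = 0 ∨ n < c → π c = 1) ∧
  (∀ c, 1 ≤ c → c ≤ n → spot π c ≤ n)

/-- The bird's-eye permutation `ω_π`: the car parked at spot `i` (and `0` at `0`). -/
noncomputable def birdsEye (n : ℕ) (π : ℕ → ℕ) (i : ℕ) : ℕ :=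
  if i = 0 then 0 else sInf {c | 1 ≤ c ∧ c ≤ n ∧ spot π c = i}

/-- The inverse of the bird's-eye permutation. -/
noncomputable def birdsEyeInv (n : ℕ) (π : ℕ → ℕ) (c : ℕ) : ℕ :=
  sInf {i | birdsEye n π i = c}

/-- Parent function of the parking tree `PT(π)`: `f_π i = ω_π (π i - 1)`. -/
noncomputable def ptParent (n : ℕ) (π : ℕ → ℕ) (i : ℕ) : ℕ :=
  if 1 ≤ i ∧ i ≤ n then birdsEye n π (π i - 1) else 0

/-- `v` is a record of the parking function `π`, i.e. a left-to-right maximum of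
the word `ω_π(1) ω_π(2) ⋯ ω_π(n)`. -/
def IsPfRecord (n : ℕ) (π : ℕ → ℕ) (v : ℕ) : Prop :=
  ∃ i, 1 ≤ i ∧ i ≤ n ∧ birdsEye n π i = v ∧ ∀ j, 1 ≤ j → j < i → birdsEye n π j < v

/-- The waiting time of the tree: `wait T = Σ_{i=1}^n (i - f_{pt(T)}(i))`. -/
noncomputable def wait (n : ℕ) (f : ℕ → ℕ) : ℕ :=
  ∑ i ∈ Finset.Icc 1 n, (i - prioParent n f i)

/-- The number of priority small ascents of the tree. -/
noncomputable def psa (n : ℕ) (f : ℕ → ℕ) : ℕ :=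
  ((Finset.Icc 1 n).filter fun i => prioParent n f i = i - 1).card

/-- The number of children of the root. -/
def degRoot (n : ℕ) (f : ℕ → ℕ) : ℕ := numChildren n f 0

/-- The children sequence: `chseq n f j` is the number of vertices with exactly
`j` children. -/
def chseq (n : ℕ) (f : ℕ → ℕ) (j : ℕ) : ℕ :=
  ((Finset.Icc 0 n).filter fun v => numChildren n f v = j).card

/-- The number of probes of the parking function: `n` plus the total displacement. -/
noncomputable def probes (n : ℕ) (π : ℕ → ℕ) : ℕ :=
  n + ∑ c ∈ Finset.Icc 1 n, (spot π c - π c)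

/-- The number of lucky cars of `π`: cars parking at their preferred spot. -/
noncomputable def lucky (n : ℕ) (π : ℕ → ℕ) : ℕ :=
  ((Finset.Icc 1 n).filter fun c => spot π c = π c).card

/-- The number of `1`s in `π`. -/
def ones (n : ℕ) (π : ℕ → ℕ) : ℕ :=
  ((Finset.Icc 1 n).filter fun c => π c = 1).card

/-- The multiplicity of the value `v` in the parking function `π`. -/
def multIn (n : ℕ) (π : ℕ → ℕ) (v : ℕ) : ℕ :=
  ((Finset.Icc 1 n).filter fun c => π c = v).card

/-- The multiplicity sequence: `multSeq n π j` is the number of values in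
`{1,…,n+1}` appearing exactly `j` times in `π`. -/
def multSeq (n : ℕ) (π : ℕ → ℕ) (j : ℕ) : ℕ :=
  ((Finset.Icc 1 (n + 1)).filter fun v => multIn n π v = j).card

/-- The tree is a path graph with endpoints `0` and `n`: every vertex has at most
one child and `n` is the (unique) leaf. -/
def IsPathTree (n : ℕ) (f : ℕ → ℕ) : Prop :=
  (∀ v, v ≤ n → numChildren n f v ≤ 1) ∧ numChildren n f n = 0

/-- `g` is the parent map of a rooted forest on `{1,…,n}` rooted at `{1,…,k}`:
the vertices `1,…,k` are roots (fixed points), every other vertex of `{1,…,n}` has a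
parent in `{1,…,n}`, every vertex reaches one of the roots under iteration, and `g`
is pinned to `0` outside `{1,…,n}`. -/
def IsForestRootedAt (n k : ℕ) (g : ℕ → ℕ) : Prop :=
  (∀ i, 1 ≤ i → i ≤ k → g i = i) ∧
  (∀ i, k < i → i ≤ n → 1 ≤ g i ∧ g i ≤ n) ∧
  (∀ i, 1 ≤ i → i ≤ n → ∃ m, 1 ≤ g^[m] i ∧ g^[m] i ≤ k) ∧
  (∀ i, i = 0 ∨ n < i → g i = 0)

section Parking

variable {π σ : ℕ → ℕ} {c : ℕ}

theorem spotList_eq_map_of_isLeast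
    (hσ : ∀ b ∈ Set.Icc 1 c, IsLeast {s | π b ≤ s ∧ s ∉ σ '' Set.Ico 1 b} (σ b)) :
    spotList π c = (List.range' 1 c).map σ := by
  induction c with
  | zero => rfl
  | succ c ih =>
    have ih := ih fun b hb => hσ b ⟨hb.1, hb.2.trans c.le_succ⟩
    have hmem (s : ℕ) : s ∈ spotList π c ↔ s ∈ σ '' Set.Ico 1 (c + 1) := by
      simp [ih, add_comm 1 c]
    have hspot : sInf {s | π (c + 1) ≤ s ∧ s ∉ spotList π c} = σ (c + 1) := by
      simp only [hmem]
      exact (hσ (c + 1) ⟨c.succ_pos, le_rfl⟩).csInf_eq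
    rw [spotList, hspot, ih, List.range'_1_concat, List.map_append, List.map_singleton,
      add_comm 1 c]

theorem spot_eq_of_isLeast (hc : 1 ≤ c)
    (hσ : ∀ b ∈ Set.Icc 1 c, IsLeast {s | π b ≤ s ∧ s ∉ σ '' Set.Ico 1 b} (σ b)) :
    spot π c = σ c := by
  have hlt : c - 1 < c := Nat.sub_lt hc one_pos
  simp [spot, spotList_eq_map_of_isLeast hσ, List.getD_eq_getElem?_getD, hlt,
    Nat.add_sub_cancel' hc]

end Parking

/-- The vertices from which step `i + 1` of the priority-first search chooses the smallest: those
not among the first `i + 1` vertices visited, but whose parent is. -/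
def available (n : ℕ) (f : ℕ → ℕ) (i : ℕ) : Set ℕ :=
  {v | 1 ≤ v ∧ v ≤ n ∧ v ∉ wearyList n f i ∧ f v ∈ wearyList n f i}

section Search

variable {n : ℕ} {f : ℕ → ℕ} {i v c : ℕ}

theorem wearyList_eq_cons_map (n : ℕ) (f : ℕ → ℕ) (i : ℕ) :
    wearyList n f i = 0 :: (List.range i).map fun j => sInf (available n f j) := by
  induction i with
  | zero => rfl
  | succ i ih => rw [List.range_succ, List.map_append, ← List.cons_append, ← ih]; rfl

theorem wearyList_length (n : ℕ) (f : ℕ → ℕ) (i : ℕ) : (wearyList n f i).length = i + 1 := by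
  simp [wearyList_eq_cons_map]

theorem weary_zero (n : ℕ) (f : ℕ → ℕ) : weary n f 0 = 0 := by
  simp [weary, wearyList_eq_cons_map]

theorem weary_succ (hi : i < n) : weary n f (i + 1) = sInf (available n f i) := by
  simp [weary, wearyList_eq_cons_map, hi]

theorem wearyList_eq_map_weary (hi : i ≤ n) :
    wearyList n f i = (List.range (i + 1)).map (weary n f) := by
  rw [wearyList_eq_cons_map, List.range_succ_eq_map, List.map_cons, weary_zero, List.map_map]
  congr 1
  refine List.map_congr_left fun j hj => (weary_succ ?_).symm
  exact (List.mem_range.1 hj).trans_le hi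

theorem mem_wearyList_iff (hi : i ≤ n) : v ∈ wearyList n f i ↔ ∃ j ≤ i, weary n f j = v := by
  simp [wearyList_eq_map_weary hi]

theorem zero_mem_wearyList (n : ℕ) (f : ℕ → ℕ) (i : ℕ) : 0 ∈ wearyList n f i := by
  simp [wearyList_eq_cons_map]

theorem exists_notMem_wearyList (f : ℕ → ℕ) (hi : i < n) : ∃ v ≤ n, v ∉ wearyList n f i := by
  have hcard : (wearyList n f i).toFinset.card < (Finset.range (n + 1)).card :=
    calc
      (wearyList n f i).toFinset.card ≤ i + 1 :=
        (List.toFinset_card_le _).trans_eq (wearyList_length n f i)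
      _ < (Finset.range (n + 1)).card := by simpa using hi
  obtain ⟨v, hvn, hv⟩ := Finset.exists_mem_notMem_of_card_lt_card hcard
  exact ⟨v, Finset.mem_range_succ_iff.1 hvn, mt List.mem_toFinset.2 hv⟩

theorem IsCayleyTree.mapsTo_Iic (hf : IsCayleyTree n f) :
    Set.MapsTo f (Set.Iic n) (Set.Iic n) := by
  obtain ⟨hroot, -, hle, -⟩ := hf
  intro v hv
  rcases v.eq_zero_or_pos with rfl | hpos
  · exact hroot.trans_le n.zero_le
  · exact hle v hpos hv

-- On the path from an unvisited vertex to the root, the last unvisited vertex is available.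
theorem available_nonempty (hf : IsCayleyTree n f) (hi : i < n) : (available n f i).Nonempty := by
  have hpos {v : ℕ} (hv : v ∉ wearyList n f i) : 1 ≤ v :=
    Nat.one_le_iff_ne_zero.2 fun h => hv (h ▸ zero_mem_wearyList n f i)
  obtain ⟨v, hvn, hv⟩ := exists_notMem_wearyList f hi
  have hreach : ∃ k, f^[k] v ∈ wearyList n f i := by
    obtain ⟨k, hk⟩ := hf.2.2.2 v (hpos hv) hvn
    exact ⟨k, hk ▸ zero_mem_wearyList n f i⟩
  obtain ⟨m, hm, hm'⟩ := Nat.exists_not_and_succ_of_not_zero_of_exists hv hreach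
  rw [Function.iterate_succ_apply'] at hm'
  exact ⟨f^[m] v, hpos hm, hf.mapsTo_Iic.iterate m hvn, hm, hm'⟩

theorem isLeast_weary_succ (hf : IsCayleyTree n f) (hi : i < n) :
    IsLeast (available n f i) (weary n f (i + 1)) := by
  rw [weary_succ hi]
  exact ⟨Nat.sInf_mem (available_nonempty hf hi), fun _ hv => Nat.sInf_le hv⟩

theorem weary_mapsTo (hf : IsCayleyTree n f) :
    Set.MapsTo (weary n f) (Set.Iic n) (Set.Iic n) := by
  rintro (_ | i) hi
  · exact (weary_zero n f).trans_le n.zero_le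
  · exact (isLeast_weary_succ hf hi).1.2.1

theorem weary_injOn (hf : IsCayleyTree n f) : Set.InjOn (weary n f) (Set.Iic n) := by
  have hne {i j : ℕ} (hij : i < j) (hj : j ≤ n) : weary n f i ≠ weary n f j := by
    obtain _ | j := j
    · exact absurd hij i.not_lt_zero
    · intro h
      exact (isLeast_weary_succ hf hj).1.2.2.1
        ((mem_wearyList_iff (Nat.le_of_succ_le hj)).2 ⟨i, Nat.le_of_lt_succ hij, h⟩)
  intro i hi j hj h
  by_contra hij
  rcases lt_or_gt_of_ne hij with hlt | hgt
  · exact hne hlt hj h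
  · exact hne hgt hi h.symm

theorem weary_bijOn (hf : IsCayleyTree n f) :
    Set.BijOn (weary n f) (Set.Iic n) (Set.Iic n) :=
  ((Set.finite_Iic n).injOn_iff_bijOn_of_mapsTo (weary_mapsTo hf)).1 (weary_injOn hf)

theorem wearyInv_leftInvOn (hf : IsCayleyTree n f) :
    Set.LeftInvOn (wearyInv n f) (weary n f) (Set.Iic n) := by
  refine fun i hi => IsLeast.csInf_eq (s := {j | weary n f j = weary n f i}) ⟨rfl, fun j hj => ?_⟩
  -- Beyond `n`, `weary` takes its default value `0`, but those indices exceed `i`.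
  rcases le_or_gt j n with hjn | hjn
  · exact (weary_injOn hf hjn hi hj).ge
  · exact (Set.mem_Iic.1 hi).trans hjn.le

theorem wearyInv_invOn (hf : IsCayleyTree n f) :
    Set.InvOn (wearyInv n f) (weary n f) (Set.Iic n) (Set.Iic n) :=
  ⟨wearyInv_leftInvOn hf, (weary_bijOn hf).image_eq ▸ (wearyInv_leftInvOn hf).rightInvOn_image⟩

theorem wearyInv_bijOn (hf : IsCayleyTree n f) :
    Set.BijOn (wearyInv n f) (Set.Iic n) (Set.Iic n) :=
  (weary_bijOn hf).symm (wearyInv_invOn hf).symm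

theorem wearyInv_zero (hf : IsCayleyTree n f) : wearyInv n f 0 = 0 := by
  simpa only [weary_zero] using wearyInv_leftInvOn hf n.zero_le

theorem wearyInv_pos (hf : IsCayleyTree n f) (hc : c ∈ Set.Icc 1 n) : 0 < wearyInv n f c := by
  refine Nat.pos_of_ne_zero fun h => Nat.one_le_iff_ne_zero.1 hc.1 ?_
  exact (wearyInv_bijOn hf).injOn hc.2 n.zero_le (h.trans (wearyInv_zero hf).symm)

theorem weary_pos (hf : IsCayleyTree n f) (hi : i ∈ Set.Icc 1 n) : 0 < weary n f i := by
  obtain ⟨i, rfl⟩ := Nat.exists_eq_add_of_le' hi.1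
  exact (isLeast_weary_succ hf hi.2).1.1

theorem mem_wearyList_iff_wearyInv_le (hf : IsCayleyTree n f) (hi : i ≤ n) (hv : v ≤ n) :
    v ∈ wearyList n f i ↔ wearyInv n f v ≤ i := by
  rw [mem_wearyList_iff hi]
  constructor
  · rintro ⟨j, hj, rfl⟩
    exact (wearyInv_leftInvOn hf (hj.trans hi)).trans_le hj
  · exact fun h => ⟨wearyInv n f v, h, (wearyInv_invOn hf).2 hv⟩

theorem mem_available_iff (hf : IsCayleyTree n f) (hi : i ≤ n) (hc : c ∈ Set.Icc 1 n) :
    c ∈ available n f i ↔ pref n f c ≤ i + 1 ∧ i + 1 ≤ wearyInv n f c := by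
  have hself := mem_wearyList_iff_wearyInv_le hf hi hc.2
  have hparent := mem_wearyList_iff_wearyInv_le hf hi (hf.mapsTo_Iic hc.2)
  obtain ⟨hpos, hle⟩ := hc
  rw [available, Set.mem_ofPred_eq, hself, hparent, pref]
  lia

theorem pref_le_wearyInv (hf : IsCayleyTree n f) (hc : c ∈ Set.Icc 1 n) :
    pref n f c ≤ wearyInv n f c := by
  have hle : wearyInv n f c ≤ n := (wearyInv_bijOn hf).mapsTo hc.2
  have hvisit : weary n f (wearyInv n f c) = c := (wearyInv_invOn hf).2 hc.2
  obtain ⟨i, hi⟩ := Nat.exists_eq_add_of_le' (wearyInv_pos hf hc)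
  rw [hi] at hle hvisit ⊢
  have havail : c ∈ available n f i := hvisit ▸ (isLeast_weary_succ hf hle).1
  exact ((mem_available_iff hf (Nat.le_of_succ_le hle) hc).1 havail).1

theorem weary_lt_of_pref_le_of_lt_wearyInv (hf : IsCayleyTree n f) (hc : c ∈ Set.Icc 1 n)
    (hle : pref n f c ≤ i) (hlt : i < wearyInv n f c) : weary n f i < c := by
  have hin : i < n := hlt.trans_le ((wearyInv_bijOn hf).mapsTo hc.2)
  refine lt_of_le_of_ne ?_ fun h => hlt.ne' ?_
  · obtain ⟨j, rfl⟩ := Nat.exists_eq_add_of_le' (le_of_add_le_right hle)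
    exact (isLeast_weary_succ hf (Nat.lt_of_succ_lt hin)).2
      ((mem_available_iff hf (Nat.le_of_succ_le hin.le) hc).2 ⟨hle, hlt.le⟩)
  · exact h ▸ wearyInv_leftInvOn hf hin.le

theorem isLeast_wearyInv (hf : IsCayleyTree n f) (hc : c ∈ Set.Icc 1 n) :
    IsLeast {s | pref n f c ≤ s ∧ s ∉ wearyInv n f '' Set.Ico 1 c} (wearyInv n f c) := by
  refine ⟨⟨pref_le_wearyInv hf hc, ?_⟩, ?_⟩
  · rintro ⟨b, hb, hbc⟩
    exact hb.2.ne ((wearyInv_bijOn hf).injOn (hb.2.le.trans hc.2) hc.2 hbc)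
  · rintro s ⟨hprefs, hs⟩
    by_contra! hlt
    have hsn : s ≤ n := hlt.le.trans ((wearyInv_bijOn hf).mapsTo hc.2)
    have hpos : 0 < weary n f s := weary_pos hf ⟨le_of_add_le_right hprefs, hsn⟩
    have hsmaller : weary n f s < c := weary_lt_of_pref_le_of_lt_wearyInv hf hc hprefs hlt
    exact hs ⟨weary n f s, ⟨hpos, hsmaller⟩, wearyInv_leftInvOn hf hsn⟩

theorem spot_pref (hf : IsCayleyTree n f) (hc : c ∈ Set.Icc 1 n) :
    spot (pref n f) c = wearyInv n f c :=
  spot_eq_of_isLeast hc.1 fun _ hb => isLeast_wearyInv hf ⟨hb.1, hb.2.trans hc.2⟩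

end Search

/-- The preference sequence `π_T(i) = ω_T⁻¹(f_T(i)) + 1` of a
Cayley tree is a parking function of length `n`. -/
theorem stmt12 (n : ℕ) (f : ℕ → ℕ) (hf : IsCayleyTree n f) :
    IsParkingFun n (pref n f) := by
  have hle {c : ℕ} (hc : c ≤ n) : wearyInv n f c ≤ n := (wearyInv_bijOn hf).mapsTo hc
  refine ⟨fun c hc1 hc => ⟨Nat.succ_pos _, ?_⟩, fun c hc => ?_, fun c hc1 hc => ?_⟩
  · exact (pref_le_wearyInv hf ⟨hc1, hc⟩).trans (hle hc)
  · have hparent : f c = 0 := hc.elim (fun h => h ▸ hf.1) (hf.2.1 c)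
    rw [pref, hparent, wearyInv_zero hf]
  · exact (spot_pref hf ⟨hc1, hc⟩).trans_le (hle hc)

end WearyParking
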